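/- arXiv:1811.11219 — 2 statements merged into one kernel-verified Lean document; each statement's English description precedes it below -/
import Mathlib

section
/- Let λ be a partition with no repeated odd part and let ζ = β₁(λ) be the partition with ζ_{2i−1} = ⌊(λ_i + 1)/2⌋ and ζ_{2i} = ⌊λ_i/2⌋. Then the number of odd parts of ζ equals twice the number of parts of λ congruent to 2 modulo 4 plus the number of odd parts of λ. -/
/-- A partition, modeled as a nonincreasing function `ℕ → ℕ` with only finitely many
nonzero terms. -/
def IsPartitionFun (f : ℕ → ℕ) : Prop :=
  (∀ i j, i ≤ j → f j ≤ f i) ∧ ∃ N, ∀ i, N ≤ i → f i = 0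

/-- A partition has no repeated odd part. -/
def NoRepeatedOddPart (f : ℕ → ℕ) : Prop :=
  ∀ i j, i ≠ j → Odd (f i) → f i ≠ f j

/-- `𝒪(f)`: the number of odd parts of the partition `f`. -/
noncomputable def oddParts (f : ℕ → ℕ) : ℕ := {i | Odd (f i)}.ncard

/-!
Each part `n` of `λ` contributes the two terms `⌊(n + 1) / 2⌋` and `⌊n / 2⌋` to `ζ`. The first is
odd exactly when `n ≡ 1, 2 (mod 4)`, the second exactly when `n ≡ 2, 3 (mod 4)`, so the residue `2`
is counted twice and each odd residue once. Cardinalities are taken in `ℕ∞`, where those of disjoint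
sets add up even when infinite.
-/

theorem encard_eq_add_of_isCompl_range {α β γ : Type*} {f : α → γ} {g : β → γ}
    (hf : f.Injective) (hg : g.Injective) (hfg : IsCompl (Set.range f) (Set.range g))
    (s : Set γ) : s.encard = (f ⁻¹' s).encard + (g ⁻¹' s).encard := by
  have hdisj : Disjoint (s ∩ Set.range f) (s ∩ Set.range g) :=
    hfg.disjoint.mono Set.inter_subset_right Set.inter_subset_right
  have hunion : Set.range f ∪ Set.range g = Set.univ := hfg.sup_eq_top
  rw [← hf.encard_image, ← hg.encard_image, Set.image_preimage_eq_inter_range,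
    Set.image_preimage_eq_inter_range, ← Set.encard_union_eq hdisj, ← Set.inter_union_distrib_left,
    hunion, Set.inter_univ]

theorem encard_eq_encard_even_add_encard_odd (s : Set ℕ) :
    s.encard = {i | 2 * i ∈ s}.encard + {i | 2 * i + 1 ∈ s}.encard := by
  have two_mul_injective : Function.Injective fun i : ℕ ↦ 2 * i :=
    mul_right_injective₀ two_ne_zero
  have two_mul_add_one_injective : Function.Injective fun i : ℕ ↦ 2 * i + 1 :=
    (add_left_injective 1).comp two_mul_injective
  refine encard_eq_add_of_isCompl_range two_mul_injective two_mul_add_one_injective ?_ s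
  rw [range_two_mul, range_two_mul_add_one]
  exact Nat.isCompl_even_odd

theorem encard_setOf_eq_or_eq {ι α : Type*} (f : ι → α) {a b : α} (hab : a ≠ b) :
    {i | f i = a ∨ f i = b}.encard = {i | f i = a}.encard + {i | f i = b}.encard := by
  rw [Set.ofPred_or, Set.encard_union_eq]
  exact Set.disjoint_left.2 fun _ ha hb ↦ hab (ha.symm.trans hb)

theorem odd_iff_mod_four (n : ℕ) : Odd n ↔ n % 4 = 1 ∨ n % 4 = 3 := by
  rw [Nat.odd_iff]; omega

theorem odd_div_two_iff_mod_four (n : ℕ) : Odd (n / 2) ↔ n % 4 = 2 ∨ n % 4 = 3 := by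
  rw [Nat.odd_iff]; omega

theorem odd_add_one_div_two_iff_mod_four (n : ℕ) :
    Odd ((n + 1) / 2) ↔ n % 4 = 1 ∨ n % 4 = 2 := by
  rw [Nat.odd_iff]; omega

theorem IsPartitionFun.finite_support {f : ℕ → ℕ} (hf : IsPartitionFun f) :
    f.support.Finite := by
  obtain ⟨N, hN⟩ := hf.2
  exact (Set.finite_lt_nat N).subset fun i hi ↦ lt_of_not_ge fun hNi ↦ hi (hN i hNi)

theorem IsPartitionFun.finite_setOf {f : ℕ → ℕ} (hf : IsPartitionFun f) {p : ℕ → Prop}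
    (hp : ¬ p 0) : {i | p (f i)}.Finite :=
  hf.finite_support.subset fun _ hi hzero ↦ hp (hzero ▸ hi)

theorem oddParts_beta_one_general (lam zeta : ℕ → ℕ)
    (hzeta : ∀ i, zeta (2 * i) = (lam i + 1) / 2 ∧ zeta (2 * i + 1) = lam i / 2) :
    {i | Odd (zeta i)}.encard = 2 * {i | lam i % 4 = 2}.encard + {i | Odd (lam i)}.encard := by
  let c (r : ℕ) : ℕ∞ := {i | lam i % 4 = r}.encard
  have count_pair {r s : ℕ} (hrs : r ≠ s) :
      {i | lam i % 4 = r ∨ lam i % 4 = s}.encard = c r + c s :=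
    encard_setOf_eq_or_eq (lam · % 4) hrs
  calc {i | Odd (zeta i)}.encard
      = {i | Odd ((lam i + 1) / 2)}.encard + {i | Odd (lam i / 2)}.encard := by
        rw [encard_eq_encard_even_add_encard_odd]
        simp only [Set.mem_ofPred_eq, hzeta]
    _ = (c 1 + c 2) + (c 2 + c 3) := by
        simp only [odd_add_one_div_two_iff_mod_four, odd_div_two_iff_mod_four]
        rw [count_pair (by decide), count_pair (by decide)]
    _ = 2 * c 2 + (c 1 + c 3) := by ring
    _ = 2 * {i | lam i % 4 = 2}.encard + {i | Odd (lam i)}.encard := by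
        simp only [odd_iff_mod_four]
        rw [count_pair (by decide)]

/-- Let `λ` be a partition with no repeated odd part and let `ζ = β₁(λ)`, i.e.
`ζ_{2i−1} = ⌊(λ_i + 1)/2⌋`, `ζ_{2i} = ⌊λ_i/2⌋` (zero-based: `ζ(2i) = (λ(i)+1)/2`,
`ζ(2i+1) = λ(i)/2`).  Then the number of odd parts of `ζ` equals twice the number of
parts of `λ` congruent to `2 (mod 4)` plus the number of odd parts of `λ`. -/
theorem oddParts_beta_one (lam zeta : ℕ → ℕ)
    (hlam : IsPartitionFun lam) (hodd : NoRepeatedOddPart lam)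
    (hzeta : ∀ i, zeta (2 * i) = (lam i + 1) / 2 ∧ zeta (2 * i + 1) = lam i / 2) :
    oddParts zeta = 2 * {i : ℕ | lam i % 4 = 2}.ncard + oddParts lam := by
  have two_mod_four_finite : {i | lam i % 4 = 2}.Finite :=
    hlam.finite_setOf (p := (· % 4 = 2)) (by decide)
  have odd_finite : {i | Odd (lam i)}.Finite := hlam.finite_setOf (by decide)
  rw [oddParts, oddParts, Set.ncard, oddParts_beta_one_general lam zeta hzeta,
    ← two_mod_four_finite.cast_ncard_eq, ← odd_finite.cast_ncard_eq]
  exact_mod_cast ENat.toNat_natCast _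
end

section
/- The map γ(ζ, ξ) = ζ + ξ (termwise sum) is a bijection from 𝒞 × 𝒟 onto the set 𝒫 of all partitions, where 𝒞 is the set of partitions ζ satisfying ζ_{2i−1} − ζ_{2i} ≤ 1 for all i ≥ 1 and 𝒟 is the set of partitions ξ with all terms even satisfying ξ_{2i} = ξ_{2i+1} for all i ≥ 1. That is, every partition π can be written uniquely as π = ζ + ξ with ζ ∈ 𝒞 and ξ ∈ 𝒟. Moreover, the sum of the parts of π equals the sum of the parts of ζ plus the sum of the parts of ξ. -/
/-- The sum of the parts of a partition. -/
noncomputable def partSum (f : ℕ → ℕ) : ℕ := ∑' i, f i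

/-- `𝒞`: partitions `ζ` with `ζ_{2i−1} − ζ_{2i} ≤ 1` for all `i ≥ 1`
(zero-based: `ζ(2i) ≤ ζ(2i+1) + 1`). -/
def memC (f : ℕ → ℕ) : Prop :=
  IsPartitionFun f ∧ ∀ i, f (2 * i) ≤ f (2 * i + 1) + 1

/-- `𝒟`: partitions `ξ` with all terms even and `ξ_{2i} = ξ_{2i+1}` for all `i ≥ 1`
(zero-based: `ξ(2i+1) = ξ(2i+2)`). -/
def memD (f : ℕ → ℕ) : Prop :=
  IsPartitionFun f ∧ (∀ i, Even (f i)) ∧ ∀ i, f (2 * i + 1) = f (2 * i + 2)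

/-!
Let `π = ζ + ξ` with `ζ ∈ 𝒞` and `ξ ∈ 𝒟`. In zero-based indexing, `π(2k) - π(2k+1)` is the sum of
`ζ(2k) - ζ(2k+1) ∈ {0, 1}` and the even number `ξ(2k) - ξ(2k+1)`, so by division with remainder
`ξ(2k) - ξ(2k+2) = ξ(2k) - ξ(2k+1) = 2 ⌊(π(2k) - π(2k+1)) / 2⌋`.
Since `ξ` vanishes eventually, this recurrence determines `ξ`, and hence `ζ`. Conversely, the
solution `ξ` of the recurrence lies in `𝒟`, and `π - ξ` is nonincreasing and eventually zero, hence
nonnegative, and lies in `𝒞`.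
-/

open Filter

theorem forall_of_eventually_atTop_of_succ {P : ℕ → Prop} (eventually : ∀ᶠ k in atTop, P k)
    (of_succ : ∀ k, P (k + 1) → P k) (k : ℕ) : P k := by
  obtain ⟨N, hN⟩ := eventually_atTop.1 eventually
  exact Nat.decreasingInduction (motive := fun m _ => P m) (fun m _ => of_succ m)
    (hN (max k N) (le_max_right k N)) (le_max_left k N)

theorem summable_of_eventually_eq_zero {M : Type*} [AddCommMonoid M] [TopologicalSpace M]
    {f : ℕ → M} (hf : ∀ᶠ i in atTop, f i = 0) : Summable f := by
  obtain ⟨N, hN⟩ := eventually_atTop.1 hf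
  exact summable_of_ne_finset_zero (s := Finset.range N) fun i hi => hN i (by simpa using hi)

theorem eventually_tsum_nat_add_eq_zero {M : Type*} [AddCommMonoid M] [TopologicalSpace M]
    {f : ℕ → M} (hf : ∀ᶠ i in atTop, f i = 0) : ∀ᶠ k in atTop, ∑' j, f (j + k) = 0 := by
  filter_upwards [eventually_forall_ge_atTop.2 hf] with k hk
  simp only [hk _ (Nat.le_add_left k _), tsum_zero]

namespace IsPartitionFun

variable {f g : ℕ → ℕ}

theorem antitone (hf : IsPartitionFun f) : Antitone f := fun i j => hf.1 i j

theorem eventually_eq_zero (hf : IsPartitionFun f) : ∀ᶠ i in atTop, f i = 0 :=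
  eventually_atTop.2 hf.2

theorem of_antitone (hf : Antitone f) (hf₀ : ∀ᶠ i in atTop, f i = 0) : IsPartitionFun f :=
  ⟨fun _ _ hij => hf hij, eventually_atTop.1 hf₀⟩

theorem of_antitone_of_le (hf : IsPartitionFun f) (hg : Antitone g) (hgf : ∀ i, g i ≤ f i) :
    IsPartitionFun g :=
  of_antitone hg <| hf.eventually_eq_zero.mono fun i hi => Nat.le_zero.1 (hi ▸ hgf i)

theorem add (hf : IsPartitionFun f) (hg : IsPartitionFun g) :
    IsPartitionFun fun i => f i + g i :=
  of_antitone (hf.antitone.add hg.antitone) <| by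
    filter_upwards [hf.eventually_eq_zero, hg.eventually_eq_zero] with i hfi hgi
    rw [hfi, hgi]

theorem partSum_add (hf : IsPartitionFun f) (hg : IsPartitionFun g) :
    partSum (fun i => f i + g i) = partSum f + partSum g :=
  (summable_of_eventually_eq_zero hf.eventually_eq_zero).tsum_add
    (summable_of_eventually_eq_zero hg.eventually_eq_zero)

end IsPartitionFun

/-- Half of the gap `π(2k) - π(2k+1)`, rounded down. The subtraction is truncated, which is harmless
for a nonincreasing `π`. -/
def halfGap (π : ℕ → ℕ) (k : ℕ) : ℕ := (π (2 * k) - π (2 * k + 1)) / 2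

/-- The sum of `halfGap π j` over all `j ≥ k`; this is half of the term `ξ(2k)` of the
`𝒟`-component of `π`. -/
noncomputable def halfGapTail (π : ℕ → ℕ) (k : ℕ) : ℕ := ∑' j, halfGap π (j + k)

/-- The `𝒟`-component `ξ` of a partition `π = ζ + ξ`. In zero-based indexing the terms at `2k - 1`
and `2k` form a block of equal terms, numbered `k` (the block `0` is the single term at `0`), so the
index `i` lies in block `(i + 1) / 2`. -/
noncomputable def evenComponent (π : ℕ → ℕ) (i : ℕ) : ℕ := 2 * halfGapTail π ((i + 1) / 2)

section Components

variable {π ζ ξ : ℕ → ℕ}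

theorem eventually_halfGap_eq_zero (hπ : IsPartitionFun π) : ∀ᶠ k in atTop, halfGap π k = 0 := by
  filter_upwards [eventually_forall_ge_atTop.2 hπ.eventually_eq_zero] with k hk
  simp only [halfGap, hk (2 * k) (by omega), zero_tsub, Nat.zero_div]

theorem eventually_halfGapTail_eq_zero (hπ : IsPartitionFun π) :
    ∀ᶠ k in atTop, halfGapTail π k = 0 :=
  eventually_tsum_nat_add_eq_zero (eventually_halfGap_eq_zero hπ)

theorem halfGapTail_eq_halfGap_add (hπ : IsPartitionFun π) (k : ℕ) :
    halfGapTail π k = halfGap π k + halfGapTail π (k + 1) := by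
  have tail_summable : Summable fun j => halfGap π (j + (k + 1)) :=
    summable_of_eventually_eq_zero <|
      (tendsto_add_atTop_nat (k + 1)).eventually (eventually_halfGap_eq_zero hπ)
  simp only [add_comm k 1, ← add_assoc] at tail_summable
  simpa only [halfGapTail, zero_add, add_assoc, add_comm 1 k] using
    tsum_eq_zero_add' (f := fun j => halfGap π (j + k)) tail_summable

theorem antitone_halfGapTail (hπ : IsPartitionFun π) : Antitone (halfGapTail π) :=
  antitone_nat_of_succ_le fun k => by
    rw [halfGapTail_eq_halfGap_add hπ k]
    exact Nat.le_add_left _ _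

theorem two_mul_halfGapTail_le (hπ : IsPartitionFun π) (k : ℕ) :
    2 * halfGapTail π k ≤ π (2 * k) := by
  induction k using forall_of_eventually_atTop_of_succ with
  | eventually =>
    filter_upwards [eventually_halfGapTail_eq_zero hπ] with k hk
    simp only [hk, mul_zero, zero_le]
  | of_succ k ih =>
    calc 2 * halfGapTail π k
      _ = 2 * halfGap π k + 2 * halfGapTail π (k + 1) := by
        rw [halfGapTail_eq_halfGap_add hπ k, mul_add]
      _ ≤ (π (2 * k) - π (2 * k + 1)) + π (2 * k + 1) :=
        add_le_add (Nat.mul_div_le _ 2) (ih.trans (hπ.antitone (by omega)))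
      _ = π (2 * k) := Nat.sub_add_cancel (hπ.antitone (Nat.le_succ _))

theorem evenComponent_two_mul_add_one_eq (π : ℕ → ℕ) (k : ℕ) :
    evenComponent π (2 * k + 1) = evenComponent π (2 * k + 2) := by
  simp only [evenComponent, show (2 * k + 1 + 1) / 2 = (2 * k + 2 + 1) / 2 by omega]

theorem evenComponent_two_mul (hπ : IsPartitionFun π) (k : ℕ) :
    evenComponent π (2 * k) = evenComponent π (2 * k + 1) + 2 * halfGap π k := by
  simp only [evenComponent, show (2 * k + 1) / 2 = k by omega,
    show (2 * k + 1 + 1) / 2 = k + 1 by omega, halfGapTail_eq_halfGap_add hπ k]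
  ring

theorem evenComponent_le (hπ : IsPartitionFun π) (i : ℕ) : evenComponent π i ≤ π i :=
  (two_mul_halfGapTail_le hπ _).trans (hπ.antitone (by omega))

theorem antitone_evenComponent (hπ : IsPartitionFun π) : Antitone (evenComponent π) :=
  fun _ _ hij => Nat.mul_le_mul_left 2 (antitone_halfGapTail hπ (by omega))

theorem memD_evenComponent (hπ : IsPartitionFun π) : memD (evenComponent π) :=
  ⟨hπ.of_antitone_of_le (antitone_evenComponent hπ) (evenComponent_le hπ),
    fun _ => even_two_mul _, evenComponent_two_mul_add_one_eq π⟩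

theorem antitone_sub_evenComponent (hπ : IsPartitionFun π) :
    Antitone fun i => π i - evenComponent π i :=
  antitone_nat_of_succ_le fun i => by
    have gap_nonneg : π (i + 1) ≤ π i := hπ.antitone (Nat.le_succ i)
    obtain ⟨k, rfl | rfl⟩ := Nat.even_or_odd' i
    · have even_gap := evenComponent_two_mul hπ k
      simp only [halfGap] at even_gap
      omega
    · rw [evenComponent_two_mul_add_one_eq]
      exact Nat.sub_le_sub_right gap_nonneg _

theorem memC_sub_evenComponent (hπ : IsPartitionFun π) :
    memC fun i => π i - evenComponent π i := by
  refine ⟨hπ.of_antitone_of_le (antitone_sub_evenComponent hπ) fun i => Nat.sub_le _ _,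
    fun k => ?_⟩
  have even_gap := evenComponent_two_mul hπ k
  have even_le := evenComponent_le hπ (2 * k + 1)
  simp only [halfGap] at even_gap ⊢
  omega

theorem apply_two_mul_eq_add_of_memC_of_memD (hζ : memC ζ) (hξ : memD ξ) (k : ℕ) :
    ξ (2 * k) = ξ (2 * k + 1) + 2 * halfGap (fun i => ζ i + ξ i) k := by
  have ζ_succ_le : ζ (2 * k + 1) ≤ ζ (2 * k) := hζ.1.antitone (Nat.le_succ _)
  have ζ_le : ζ (2 * k) ≤ ζ (2 * k + 1) + 1 := hζ.2 k
  have ξ_succ_le : ξ (2 * k + 1) ≤ ξ (2 * k) := hξ.1.antitone (Nat.le_succ _)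
  obtain ⟨a, ha⟩ := hξ.2.1 (2 * k)
  obtain ⟨b, hb⟩ := hξ.2.1 (2 * k + 1)
  simp only [halfGap]
  omega

theorem apply_two_mul_eq_halfGapTail_of_memC_of_memD (hζ : memC ζ) (hξ : memD ξ) (k : ℕ) :
    ξ (2 * k) = 2 * halfGapTail (fun i => ζ i + ξ i) k := by
  have hπ := hζ.1.add hξ.1
  induction k using forall_of_eventually_atTop_of_succ with
  | eventually =>
    filter_upwards [eventually_forall_ge_atTop.2 hξ.1.eventually_eq_zero,
      eventually_halfGapTail_eq_zero hπ] with k hξk htail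
    simp only [hξk (2 * k) (by omega), htail, mul_zero]
  | of_succ k ih =>
    rw [apply_two_mul_eq_add_of_memC_of_memD hζ hξ, hξ.2.2, ← mul_add_one, ih,
      halfGapTail_eq_halfGap_add hπ k]
    ring

theorem eq_evenComponent_of_memC_of_memD (hζ : memC ζ) (hξ : memD ξ) :
    ξ = evenComponent fun i => ζ i + ξ i := by
  funext i
  rw [evenComponent, ← apply_two_mul_eq_halfGapTail_of_memC_of_memD hζ hξ]
  obtain ⟨k, rfl | rfl⟩ := Nat.even_or_odd' i
  · rw [show (2 * k + 1) / 2 = k by omega]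
  · rw [show 2 * ((2 * k + 1 + 1) / 2) = 2 * k + 2 by omega, hξ.2.2]

end Components

/-- The map `γ(ζ, ξ) = ζ + ξ` (termwise sum) is a bijection from `𝒞 × 𝒟` onto the set
`𝒫` of all partitions: the termwise sum of a pair in `𝒞 × 𝒟` is a partition, every
partition `π` is uniquely `π = ζ + ξ` with `ζ ∈ 𝒞`, `ξ ∈ 𝒟`, and the sum of the parts
of `π` equals the sum of the parts of `ζ` plus that of `ξ`. -/
theorem gamma_bijection :
    (∀ zeta xi : ℕ → ℕ, memC zeta → memD xi →
      IsPartitionFun (fun i => zeta i + xi i) ∧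
      partSum (fun i => zeta i + xi i) = partSum zeta + partSum xi) ∧
    (∀ pi : ℕ → ℕ, IsPartitionFun pi →
      ∃! p : (ℕ → ℕ) × (ℕ → ℕ), memC p.1 ∧ memD p.2 ∧ ∀ i, p.1 i + p.2 i = pi i) := by
  refine ⟨fun ζ ξ hζ hξ => ⟨hζ.1.add hξ.1, hζ.1.partSum_add hξ.1⟩, fun π hπ => ?_⟩
  refine ⟨(fun i => π i - evenComponent π i, evenComponent π),
    ⟨memC_sub_evenComponent hπ, memD_evenComponent hπ,
      fun i => Nat.sub_add_cancel (evenComponent_le hπ i)⟩, ?_⟩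
  rintro ⟨ζ, ξ⟩ ⟨hζ, hξ, hsum⟩
  obtain rfl : (fun i => ζ i + ξ i) = π := funext hsum
  refine Prod.ext (funext fun i => ?_) (eq_evenComponent_of_memC_of_memD hζ hξ)
  simp only [← eq_evenComponent_of_memC_of_memD hζ hξ, Nat.add_sub_cancel]
end
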